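/- For any prime power q ≥ 5, the real chords of the twisted cubic C form a single orbit of lines under G_q, and the stabilizer in G_q of any real chord has order 2(q−1). Moreover, the stabilizer in G_q of the real chord ℓ through P(0) = (0:0:0:1) and P(∞) = (1:0:0:0) consists exactly of the projectivities induced by the diagonal matrices diag(1, d, d², d³) with d ∈ F_q^*, together with the antidiagonal matrices with rows (0,0,0,1), (0,0,b,0), (0,b²,0,0), (b³,0,0,0) with b ∈ F_q^*. -/

import Mathlib

open Matrix Submodule

noncomputable section

/-- Row-vector action of an invertible matrix on subspaces of `F^4`:
a projectivity of `PG(3,q)` induced by the matrix. -/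
def projAct (F : Type) [Field F] (A : GL (Fin 4) F) :
    Submodule F (Fin 4 → F) → Submodule F (Fin 4 → F) :=
  fun W => W.map (Matrix.vecMulLinear (A : Matrix (Fin 4) (Fin 4) F))

/-- Representative vectors of the points of the twisted cubic. -/
def cubicVecs (F : Type) [Field F] : Set (Fin 4 → F) :=
  {v | (∃ t : F, v = ![t ^ 3, t ^ 2, t, 1]) ∨ v = ![1, 0, 0, 0]}

/-- The twisted cubic, as a set of projective points (1-dimensional subspaces). -/
def twistedCubic (F : Type) [Field F] : Set (Submodule F (Fin 4 → F)) :=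
  (fun v => Submodule.span F {v}) '' cubicVecs F

/-- The group `G_q` of projectivities fixing the twisted cubic, modeled as those maps
on subspaces that are induced by an invertible matrix and map the cubic onto itself. -/
def Gq (F : Type) [Field F] :
    Set ((Submodule F (Fin 4 → F)) → (Submodule F (Fin 4 → F))) :=
  {f | (∃ A : GL (Fin 4) F, f = projAct F A) ∧ f '' twistedCubic F = twistedCubic F}

def isPoint (F : Type) [Field F] (W : Submodule F (Fin 4 → F)) : Prop :=
  Module.finrank F W = 1

def isLine (F : Type) [Field F] (W : Submodule F (Fin 4 → F)) : Prop :=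
  Module.finrank F W = 2

/-- The orbit of a line under `G_q`. -/
def lineOrbit (F : Type) [Field F] (ℓ : Submodule F (Fin 4 → F)) :
    Set (Submodule F (Fin 4 → F)) :=
  {m | ∃ f ∈ Gq F, f ℓ = m}

/-- The stabilizer of a line in `G_q`. -/
def lineStab (F : Type) [Field F] (ℓ : Submodule F (Fin 4 → F)) :
    Set ((Submodule F (Fin 4 → F)) → (Submodule F (Fin 4 → F))) :=
  {f ∈ Gq F | f ℓ = ℓ}

/-- The linear form `y ↦ c0 y0 + c1 y1 + c2 y2 + c3 y3` defining a plane. -/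
def planeForm (F : Type) [Field F] (c : Fin 4 → F) : (Fin 4 → F) →ₗ[F] F where
  toFun y := c 0 * y 0 + c 1 * y 1 + c 2 * y 2 + c 3 * y 3
  map_add' a b := by simp only [Pi.add_apply]; ring
  map_smul' r a := by simp only [Pi.smul_apply, smul_eq_mul, RingHom.id_apply]; ring

/-- The plane `π(c0,c1,c2,c3)`. -/
def planeOf (F : Type) [Field F] (c : Fin 4 → F) : Submodule F (Fin 4 → F) :=
  LinearMap.ker (planeForm F c)

/-- The null polarity `𝔄`: the polar subspace of `W` w.r.t. the bilinear form
sending a point `(x0:x1:x2:x3)` to the plane `π(x3, −3x2, 3x1, −x0)`. -/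
def nullPolarity (F : Type) [Field F] (W : Submodule F (Fin 4 → F)) :
    Submodule F (Fin 4 → F) :=
  ⨅ x ∈ (W : Set (Fin 4 → F)), planeOf F ![x 3, -(3 * x 2), 3 * x 1, -(x 0)]

/-- The tangent line to the twisted cubic at `P(t)`, `t ∈ F`. -/
def tangentAt (F : Type) [Field F] (t : F) : Submodule F (Fin 4 → F) :=
  Submodule.span F {![t ^ 3, t ^ 2, t, 1], ![3 * t ^ 2, 2 * t, 1, 0]}

/-- The tangent line to the twisted cubic at `P(∞)`. -/
def tangentAtInf (F : Type) [Field F] : Submodule F (Fin 4 → F) :=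
  Submodule.span F {![1, 0, 0, 0], ![0, 1, 0, 0]}

def isTangent (F : Type) [Field F] (ℓ : Submodule F (Fin 4 → F)) : Prop :=
  (∃ t : F, ℓ = tangentAt F t) ∨ ℓ = tangentAtInf F

/-- The osculating plane at `P(t)`, `t ∈ F`. -/
def oscPlane (F : Type) [Field F] (t : F) : Submodule F (Fin 4 → F) :=
  planeOf F ![1, -(3 * t), 3 * t ^ 2, -(t ^ 3)]

/-- The osculating plane at `P(∞)`. -/
def oscPlaneInf (F : Type) [Field F] : Submodule F (Fin 4 → F) :=
  planeOf F ![0, 0, 0, 1]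

def isOscPlane (F : Type) [Field F] (π : Submodule F (Fin 4 → F)) : Prop :=
  (∃ t : F, π = oscPlane F t) ∨ π = oscPlaneInf F

/-- A real chord: the line joining two distinct points of the twisted cubic. -/
def isRealChord (F : Type) [Field F] (ℓ : Submodule F (Fin 4 → F)) : Prop :=
  ∃ u ∈ cubicVecs F, ∃ v ∈ cubicVecs F,
    Submodule.span F {u} ≠ Submodule.span F {v} ∧ ℓ = Submodule.span F {u, v}

/-- A real axis: the intersection of two distinct osculating planes. -/
def isRealAxis (F : Type) [Field F] (ℓ : Submodule F (Fin 4 → F)) : Prop :=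
  ∃ π₁ π₂ : Submodule F (Fin 4 → F),
    isOscPlane F π₁ ∧ isOscPlane F π₂ ∧ π₁ ≠ π₂ ∧ ℓ = π₁ ⊓ π₂

/-- The `F_{q²}`-extension of a subspace of `F^4`. -/
def extendSub (F K : Type) [Field F] [Field K] [Algebra F K]
    (W : Submodule F (Fin 4 → F)) : Submodule K (Fin 4 → K) :=
  Submodule.span K ((fun v i => algebraMap F K (v i)) '' (W : Set (Fin 4 → F)))

/-- An external line: a line containing no point of the twisted cubic. -/
def isExternal (F : Type) [Field F] (ℓ : Submodule F (Fin 4 → F)) : Prop :=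
  isLine F ℓ ∧ ∀ P ∈ twistedCubic F, ¬ P ≤ ℓ

/-- An imaginary chord: a line disjoint from the cubic whose `F_{q²}`-extension joins a
pair of Frobenius-conjugate points `P(t)`, `P(t^q)` of the cubic over `F_{q²}`. -/
def isImagChord (F K : Type) [Field F] [Field K] [Algebra F K] (q : ℕ)
    (ℓ : Submodule F (Fin 4 → F)) : Prop :=
  isExternal F ℓ ∧
  ∃ t : K, t ∉ Set.range (algebraMap F K) ∧
    extendSub F K ℓ =
      Submodule.span K
        ({![t ^ 3, t ^ 2, t, 1], ![(t ^ q) ^ 3, (t ^ q) ^ 2, t ^ q, 1]} :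
          Set (Fin 4 → K))

/-- An imaginary axis: a line whose `F_{q²}`-extension is the intersection of a pair of
Frobenius-conjugate osculating planes `π_osc(t)`, `π_osc(t^q)` over `F_{q²}`. -/
def isImagAxis (F K : Type) [Field F] [Field K] [Algebra F K] (q : ℕ)
    (ℓ : Submodule F (Fin 4 → F)) : Prop :=
  isLine F ℓ ∧
  ∃ t : K, t ∉ Set.range (algebraMap F K) ∧
    extendSub F K ℓ =
      planeOf K ![1, -(3 * t), 3 * t ^ 2, -(t ^ 3)] ⊓
        planeOf K ![1, -(3 * t ^ q), 3 * (t ^ q) ^ 2, -((t ^ q) ^ 3)]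

/-- A unisecant: a line meeting the twisted cubic in exactly one point. -/
def isUnisecant (F : Type) [Field F] (ℓ : Submodule F (Fin 4 → F)) : Prop :=
  isLine F ℓ ∧ ∃! P, P ∈ twistedCubic F ∧ P ≤ ℓ

/-- A `UΓ`-line: a non-tangent unisecant lying in some osculating plane. -/
def isUGamma (F : Type) [Field F] (ℓ : Submodule F (Fin 4 → F)) : Prop :=
  isUnisecant F ℓ ∧ ¬ isTangent F ℓ ∧ ∃ π, isOscPlane F π ∧ ℓ ≤ π

/-- A `UnΓ`-line: a non-tangent unisecant lying in no osculating plane. -/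
def isUnGamma (F : Type) [Field F] (ℓ : Submodule F (Fin 4 → F)) : Prop :=
  isUnisecant F ℓ ∧ ¬ isTangent F ℓ ∧ ∀ π, isOscPlane F π → ¬ ℓ ≤ π

/-- An `EΓ`-line: an external line, other than an imaginary chord, lying in some
osculating plane. -/
def isEGamma (F K : Type) [Field F] [Field K] [Algebra F K] (q : ℕ)
    (ℓ : Submodule F (Fin 4 → F)) : Prop :=
  isExternal F ℓ ∧ ¬ isImagChord F K q ℓ ∧ ∃ π, isOscPlane F π ∧ ℓ ≤ π

/-- For `q ≡ 0 (mod 3)`: the axis of `Γ`, the line `x0 = x3 = 0`. -/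
def axisLine (F : Type) [Field F] : Submodule F (Fin 4 → F) :=
  Submodule.span F {![0, 1, 0, 0], ![0, 0, 1, 0]}

/-- For `q ≡ 0 (mod 3)`: an `EA`-line, i.e. an external line, other than an imaginary
chord and other than the axis of `Γ`, meeting the axis of `Γ`. -/
def isEA (F K : Type) [Field F] [Field K] [Algebra F K] (q : ℕ)
    (ℓ : Submodule F (Fin 4 → F)) : Prop :=
  isExternal F ℓ ∧ ¬ isImagChord F K q ℓ ∧ ℓ ≠ axisLine F ∧ ℓ ⊓ axisLine F ≠ ⊥

end

section helpers
variable {F : Type} [Field F]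

lemma projAct_span (A : GL (Fin 4) F) (s : Set (Fin 4 → F)) :
    projAct F A (Submodule.span F s) =
      Submodule.span F ((fun v => v ᵥ* (A : Matrix (Fin 4) (Fin 4) F)) '' s) := by
  unfold projAct
  rw [Submodule.map_span]
  rfl

lemma projAct_one_pt (A : GL (Fin 4) F) (v : Fin 4 → F) :
    projAct F A (Submodule.span F {v}) =
      Submodule.span F {v ᵥ* (A : Matrix (Fin 4) (Fin 4) F)} := by
  rw [projAct_span, Set.image_singleton]

lemma projAct_two_pt (A : GL (Fin 4) F) (u v : Fin 4 → F) :
    projAct F A (Submodule.span F {u, v}) =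
      Submodule.span F {u ᵥ* (A : Matrix (Fin 4) (Fin 4) F), v ᵥ* (A : Matrix (Fin 4) (Fin 4) F)} := by
  rw [projAct_span, Set.image_pair]

lemma projAct_mul (A B : GL (Fin 4) F) : projAct F (A * B) = projAct F B ∘ projAct F A := by
  funext W
  simp only [projAct, Function.comp, ← Submodule.map_comp]
  congr 1
  refine LinearMap.ext fun v => ?_
  simp [Matrix.vecMul_vecMul]

lemma projAct_id : projAct F (1 : GL (Fin 4) F) = id := by
  funext W
  have : Matrix.vecMulLinear ((1 : GL (Fin 4) F) : Matrix (Fin 4) (Fin 4) F) = LinearMap.id := by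
    refine LinearMap.ext fun v => ?_
    simp
  unfold projAct
  rw [this, Submodule.map_id]
  rfl

lemma projAct_left_inv (A : GL (Fin 4) F) (W) : projAct F A⁻¹ (projAct F A W) = W := by
  have := congrFun (projAct_mul A A⁻¹) W
  rw [mul_inv_cancel, projAct_id] at this
  exact this.symm

lemma projAct_right_inv (A : GL (Fin 4) F) (W) : projAct F A (projAct F A⁻¹ W) = W := by
  have := projAct_left_inv A⁻¹ W
  rwa [inv_inv] at this

lemma projAct_inj (A : GL (Fin 4) F) : Function.Injective (projAct F A) :=
  Function.LeftInverse.injective (projAct_left_inv A)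

lemma projAct_smul (A B : GL (Fin 4) F) (k : F) (hk : k ≠ 0)
    (h : (A : Matrix (Fin 4) (Fin 4) F) = k • (B : Matrix (Fin 4) (Fin 4) F)) :
    projAct F A = projAct F B := by
  funext W
  ext x
  simp only [projAct, Submodule.mem_map, Matrix.vecMulLinear_apply, h, Matrix.vecMul_smul]
  constructor
  · rintro ⟨y, hy, rfl⟩
    exact ⟨k • y, W.smul_mem k hy, by rw [Matrix.smul_vecMul]⟩
  · rintro ⟨y, hy, rfl⟩
    exact ⟨k⁻¹ • y, W.smul_mem _ hy, by rw [Matrix.smul_vecMul, smul_smul, mul_inv_cancel₀ hk, one_smul]⟩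

lemma mem_Gq_of [Finite F] (A : GL (Fin 4) F)
    (h : ∀ v ∈ cubicVecs F, ∃ c : F, c ≠ 0 ∧ ∃ w ∈ cubicVecs F,
      v ᵥ* (A : Matrix (Fin 4) (Fin 4) F) = c • w) : projAct F A ∈ Gq F := by
  refine ⟨⟨A, rfl⟩, ?_⟩
  have hfin : (twistedCubic F).Finite := (Set.toFinite (cubicVecs F)).image _
  refine Set.eq_of_subset_of_ncard_le ?_ ?_ hfin
  · rintro _ ⟨_, ⟨v, hv, rfl⟩, rfl⟩
    obtain ⟨c, hc, w, hw, e⟩ := h v hv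
    refine ⟨w, hw, ?_⟩
    simp only
    rw [projAct_one_pt, e, Submodule.span_singleton_smul_eq (IsUnit.mk0 c hc)]
  · rw [Set.ncard_image_of_injective _ (projAct_inj A)]

lemma Gq_mul (A B : GL (Fin 4) F) (hA : projAct F A ∈ Gq F) (hB : projAct F B ∈ Gq F) :
    projAct F (A * B) ∈ Gq F := by
  refine ⟨⟨_, rfl⟩, ?_⟩
  rw [projAct_mul, Set.image_comp, hA.2, hB.2]

lemma Gq_inv (A : GL (Fin 4) F) (hA : projAct F A ∈ Gq F) : projAct F A⁻¹ ∈ Gq F := by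
  refine ⟨⟨_, rfl⟩, ?_⟩
  conv_lhs => rw [← hA.2]
  rw [← Set.image_comp, ← projAct_mul, mul_inv_cancel, projAct_id, Set.image_id]

/-- image of a cubic vector is a multiple of a cubic vector -/
lemma Gq_vec (A : GL (Fin 4) F) (hA : projAct F A ∈ Gq F) (v) (hv : v ∈ cubicVecs F) :
    ∃ c : F, c ≠ 0 ∧ ∃ w ∈ cubicVecs F, v ᵥ* (A : Matrix (Fin 4) (Fin 4) F) = c • w := by
  have : projAct F A (Submodule.span F {v}) ∈ twistedCubic F := by
    rw [← hA.2]; exact ⟨_, ⟨v, hv, rfl⟩, rfl⟩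
  obtain ⟨w, hw, e⟩ := this
  simp only at e
  rw [projAct_one_pt, Submodule.span_singleton_eq_span_singleton] at e
  obtain ⟨z, hz⟩ := e
  exact ⟨z, z.ne_zero, w, hw, hz.symm⟩

def dmat (d : F) (hd : d ≠ 0) : GL (Fin 4) F :=
  ⟨!![1, 0, 0, 0; 0, d, 0, 0; 0, 0, d ^ 2, 0; 0, 0, 0, d ^ 3],
   !![1, 0, 0, 0; 0, d⁻¹, 0, 0; 0, 0, (d ^ 2)⁻¹, 0; 0, 0, 0, (d ^ 3)⁻¹],
   by ext i j; fin_cases i <;> fin_cases j <;> simp [Matrix.mul_apply, Fin.sum_univ_four, hd],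
   by ext i j; fin_cases i <;> fin_cases j <;> simp [Matrix.mul_apply, Fin.sum_univ_four, hd]⟩

def amat (b : F) (hb : b ≠ 0) : GL (Fin 4) F :=
  ⟨!![0, 0, 0, 1; 0, 0, b, 0; 0, b ^ 2, 0, 0; b ^ 3, 0, 0, 0],
   !![0, 0, 0, (b ^ 3)⁻¹; 0, 0, (b ^ 2)⁻¹, 0; 0, b⁻¹, 0, 0; 1, 0, 0, 0],
   by ext i j; fin_cases i <;> fin_cases j <;> simp [Matrix.mul_apply, Fin.sum_univ_four, hb],
   by ext i j; fin_cases i <;> fin_cases j <;> simp [Matrix.mul_apply, Fin.sum_univ_four, hb]⟩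

def tmat (c : F) : GL (Fin 4) F :=
  ⟨!![1, 0, 0, 0; 3 * c, 1, 0, 0; 3 * c ^ 2, 2 * c, 1, 0; c ^ 3, c ^ 2, c, 1],
   !![1, 0, 0, 0; -3 * c, 1, 0, 0; 3 * c ^ 2, -2 * c, 1, 0; -c ^ 3, c ^ 2, -c, 1],
   by ext i j; fin_cases i <;> fin_cases j <;> simp [Matrix.mul_apply, Fin.sum_univ_four] <;> ring,
   by ext i j; fin_cases i <;> fin_cases j <;> simp [Matrix.mul_apply, Fin.sum_univ_four] <;> ring⟩

lemma vec_ext4 {u v : Fin 4 → F} (h0 : u 0 = v 0) (h1 : u 1 = v 1) (h2 : u 2 = v 2)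
    (h3 : u 3 = v 3) : u = v := by
  funext i; fin_cases i <;> assumption

lemma dmat_P (d : F) (hd : d ≠ 0) (x y z w : F) :
    ![x, y, z, w] ᵥ* (dmat d hd : Matrix (Fin 4) (Fin 4) F) = ![x, d * y, d ^ 2 * z, d ^ 3 * w] := by
  apply vec_ext4 <;> simp [dmat, Matrix.vecMul, dotProduct, Fin.sum_univ_four, mul_comm]

lemma amat_P (d : F) (hd : d ≠ 0) (x y z w : F) :
    ![x, y, z, w] ᵥ* (amat d hd : Matrix (Fin 4) (Fin 4) F) = ![d ^ 3 * w, d ^ 2 * z, d * y, x] := by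
  apply vec_ext4 <;> simp [amat, Matrix.vecMul, dotProduct, Fin.sum_univ_four, mul_comm]

lemma tmat_P (c : F) (x y z w : F) :
    ![x, y, z, w] ᵥ* (tmat c : Matrix (Fin 4) (Fin 4) F) =
      ![x + 3 * c * y + 3 * c ^ 2 * z + c ^ 3 * w, y + 2 * c * z + c ^ 2 * w, z + c * w, w] := by
  apply vec_ext4 <;> simp [tmat, Matrix.vecMul, dotProduct, Fin.sum_univ_four] <;> ring

lemma dmat_Gq [Finite F] (d : F) (hd : d ≠ 0) : projAct F (dmat d hd) ∈ Gq F := by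
  apply mem_Gq_of
  rintro v (⟨t, rfl⟩ | rfl)
  · refine ⟨d ^ 3, pow_ne_zero _ hd, _, Or.inl ⟨t / d, rfl⟩, ?_⟩
    rw [dmat_P]
    apply vec_ext4 <;> simp <;> field_simp
  · refine ⟨1, one_ne_zero, _, Or.inr rfl, ?_⟩
    rw [dmat_P]; simp

lemma amat_Gq [Finite F] (d : F) (hd : d ≠ 0) : projAct F (amat d hd) ∈ Gq F := by
  apply mem_Gq_of
  rintro v (⟨t, rfl⟩ | rfl)
  · by_cases ht : t = 0
    · refine ⟨d ^ 3, pow_ne_zero _ hd, _, Or.inr rfl, ?_⟩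
      rw [amat_P]; subst ht
      apply vec_ext4 <;> simp
    · refine ⟨t ^ 3, pow_ne_zero _ ht, _, Or.inl ⟨d / t, rfl⟩, ?_⟩
      rw [amat_P]
      apply vec_ext4 <;> simp <;> field_simp
  · refine ⟨1, one_ne_zero, _, Or.inl ⟨0, rfl⟩, ?_⟩
    rw [amat_P]; simp

lemma tmat_Gq [Finite F] (c : F) : projAct F (tmat c) ∈ Gq F := by
  apply mem_Gq_of
  rintro v (⟨t, rfl⟩ | rfl)
  · refine ⟨1, one_ne_zero, _, Or.inl ⟨t + c, rfl⟩, ?_⟩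
    rw [tmat_P]
    apply vec_ext4 <;> simp <;> ring
  · refine ⟨1, one_ne_zero, _, Or.inr rfl, ?_⟩
    rw [tmat_P]; simp

lemma cubic_zero [Fintype F] (hq : 5 ≤ Fintype.card F) (a b c d : F)
    (h : ∀ t : F, t ≠ 0 → a * t ^ 3 + b * t ^ 2 + c * t + d = 0) :
    a = 0 ∧ b = 0 ∧ c = 0 ∧ d = 0 := by
  classical
  let p : Cubic F := ⟨a, b, c, d⟩
  have hp : p.toPoly = 0 := by
    apply Polynomial.eq_zero_of_natDegree_lt_card_of_eval_eq_zero' p.toPoly (Finset.univ.erase (0 : F))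
    · intro t ht
      have := h t (Finset.ne_of_mem_erase ht)
      simpa [Cubic.toPoly, p] using this
    · rw [Finset.card_erase_of_mem (Finset.mem_univ _), Finset.card_univ]
      have : p.toPoly.natDegree ≤ 3 := Polynomial.natDegree_cubic_le
      omega
  have := (Cubic.toPoly_eq_zero_iff p).1 hp
  have h0 : p = ⟨0, 0, 0, 0⟩ := this
  simpa [p] using h0

lemma core [Fintype F] (hq : 5 ≤ Fintype.card F) (A : GL (Fin 4) F) (hA : projAct F A ∈ Gq F)
    (a c : F) (ha : a ≠ 0) (hc : c ≠ 0)
    (h0 : ![1, 0, 0, 0] ᵥ* (A : Matrix (Fin 4) (Fin 4) F) = a • ![1, 0, 0, 0])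
    (h3 : ![0, 0, 0, 1] ᵥ* (A : Matrix (Fin 4) (Fin 4) F) = c • ![0, 0, 0, 1]) :
    ∃ d, ∃ hd : d ≠ 0, (A : Matrix (Fin 4) (Fin 4) F) = a • (dmat d hd).1 := by
  have hdet : (A : Matrix (Fin 4) (Fin 4) F).det ≠ 0 := by
    have := (Matrix.isUnit_iff_isUnit_det _).1 A.isUnit
    exact this.ne_zero
  have hrel : ∀ t : F, ∃ y : Fin 4 → F, y = ![t ^ 3, t ^ 2, t, 1] ᵥ* (A : Matrix (Fin 4) (Fin 4) F) ∧
      y 0 * y 2 = y 1 ^ 2 ∧ y 1 * y 3 = y 2 ^ 2 := by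
    intro t
    refine ⟨_, rfl, ?_⟩
    obtain ⟨k, hk, w, hw, e⟩ := Gq_vec A hA _ (Or.inl ⟨t, rfl⟩)
    rw [e]
    rcases hw with ⟨s, rfl⟩ | rfl <;> simp <;> constructor <;> ring
  generalize (A : Matrix (Fin 4) (Fin 4) F) = M at *
  have e00 := congrFun h0 0
  have e01 := congrFun h0 1
  have e02 := congrFun h0 2
  have e03 := congrFun h0 3
  have e30 := congrFun h3 0
  have e31 := congrFun h3 1
  have e32 := congrFun h3 2
  have e33 := congrFun h3 3
  simp [Matrix.vecMul, dotProduct, Fin.sum_univ_four] at e00 e01 e02 e03 e30 e31 e32 e33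
  have key1 := cubic_zero hq (a * M 1 2) (a * M 2 2 + M 1 0 * M 1 2 - M 1 1 ^ 2)
    (M 1 0 * M 2 2 + M 2 0 * M 1 2 - 2 * M 1 1 * M 2 1) (M 2 0 * M 2 2 - M 2 1 ^ 2) (by
      intro t ht
      obtain ⟨y, rfl, h, -⟩ := hrel t
      simp [Matrix.vecMul, dotProduct, Fin.sum_univ_four, e00, e01, e02, e03, e30, e31, e32, e33] at h
      apply mul_left_cancel₀ (pow_ne_zero 2 ht)
      linear_combination h)
  have key2 := cubic_zero hq (M 1 1 * M 1 3 - M 1 2 ^ 2) (M 1 1 * M 2 3 + M 2 1 * M 1 3 - 2 * M 1 2 * M 2 2)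
    (M 1 1 * c + M 2 1 * M 2 3 - M 2 2 ^ 2) (M 2 1 * c) (by
      intro t ht
      obtain ⟨y, rfl, -, h⟩ := hrel t
      simp [Matrix.vecMul, dotProduct, Fin.sum_univ_four, e00, e01, e02, e03, e30, e31, e32, e33] at h
      apply mul_left_cancel₀ ht
      linear_combination h)
  obtain ⟨k1, k2, k3, k4⟩ := key1
  obtain ⟨l1, l2, l3, l4⟩ := key2
  have m12 : M 1 2 = 0 := by simpa [ha] using k1
  have m21 : M 2 1 = 0 := by simpa [hc] using l4
  simp [m12, m21] at k2 k3 k4 l1 l2 l3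
  have m11 : M 1 1 ≠ 0 := by
    intro m11
    have m22 : M 2 2 = 0 := by simpa [m11] using l3
    apply hdet
    simp [Matrix.det_succ_row_zero, Fin.sum_univ_succ, Fin.succAbove, e01, e02, e03, m11, m22, m12, m21, e31, e32]
  have m22 : M 2 2 ≠ 0 := by
    intro m22
    simp [m22, m11] at k2
  simp [m11, m22] at k3 k4 l1 l2
  refine ⟨M 1 1 / a, div_ne_zero m11 ha, ?_⟩
  have q2 : M 2 2 = a * (M 1 1 / a) ^ 2 := by field_simp; linear_combination k2
  have q3 : c = a * (M 1 1 / a) ^ 3 := by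
    have : c * M 1 1 * a ^ 2 = M 1 1 ^ 4 := by
      linear_combination a ^ 2 * l3 + (a * M 2 2 + M 1 1 ^ 2) * k2
    field_simp
    apply mul_left_cancel₀ m11
    linear_combination this
  have q1 : M 1 1 = a * (M 1 1 / a) := by field_simp
  ext i j
  fin_cases i <;> fin_cases j <;> simp [dmat] <;> first | assumption | (rw [e33]; exact q3)

lemma chord_pts (c : F) (hc : c ≠ 0) (w : Fin 4 → F) (hw : w ∈ cubicVecs F)
    (h : c • w ∈ Submodule.span F ({![0, 0, 0, 1], ![1, 0, 0, 0]} : Set (Fin 4 → F))) :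
    w = ![1, 0, 0, 0] ∨ w = ![0, 0, 0, 1] := by
  rw [Submodule.mem_span_pair] at h
  obtain ⟨x, y, e⟩ := h
  rcases hw with ⟨t, rfl⟩ | rfl
  · have := congrFun e 2
    simp [hc] at this
    subst this
    right; simp
  · exact Or.inl rfl

lemma e0_mem : (![1, 0, 0, 0] : Fin 4 → F) ∈ cubicVecs F := Or.inr rfl
lemma e3_mem : (![0, 0, 0, 1] : Fin 4 → F) ∈ cubicVecs F := Or.inl ⟨0, by simp⟩

lemma mulVec_inj (A : GL (Fin 4) F) {u v : Fin 4 → F}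
    (h : u ᵥ* (A : Matrix (Fin 4) (Fin 4) F) = v ᵥ* (A : Matrix (Fin 4) (Fin 4) F)) : u = v := by
  have := congrArg (fun x => x ᵥ* ((A⁻¹ : GL (Fin 4) F) : Matrix (Fin 4) (Fin 4) F)) h
  simpa only [Matrix.vecMul_vecMul, ← Units.val_mul, mul_inv_cancel, Units.val_one,
    Matrix.vecMul_one] using this

/-- stabilizer of the basic chord. -/
lemma stab_class [Fintype F] (hq : 5 ≤ Fintype.card F) (A : GL (Fin 4) F) (hA : projAct F A ∈ Gq F)
    (hl : projAct F A (Submodule.span F ({![0, 0, 0, 1], ![1, 0, 0, 0]} : Set (Fin 4 → F))) =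
      Submodule.span F ({![0, 0, 0, 1], ![1, 0, 0, 0]} : Set (Fin 4 → F))) :
    (∃ d, ∃ hd : d ≠ 0, projAct F A = projAct F (dmat d hd)) ∨
    (∃ d, ∃ hd : d ≠ 0, projAct F A = projAct F (amat d hd)) := by
  obtain ⟨a, ha, w0, hw0, h0⟩ := Gq_vec A hA _ e0_mem
  obtain ⟨c, hc, w3, hw3, h3⟩ := Gq_vec A hA _ e3_mem
  rw [projAct_two_pt] at hl
  have g0 := chord_pts a ha w0 hw0 (by
    rw [← h0, ← hl]; exact Submodule.subset_span (by simp))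
  have g3 := chord_pts c hc w3 hw3 (by
    rw [← h3, ← hl]; exact Submodule.subset_span (by simp))
  have hne : w0 ≠ w3 := by
    rintro rfl
    have : (c • ![1, 0, 0, 0]) ᵥ* (A : Matrix (Fin 4) (Fin 4) F)
      = (a • ![0, 0, 0, 1]) ᵥ* (A : Matrix (Fin 4) (Fin 4) F) := by
      rw [Matrix.smul_vecMul, Matrix.smul_vecMul, h0, h3, smul_comm]
    have := congrFun (mulVec_inj A this) 0
    simp [hc] at this
  rcases g0 with rfl | rfl <;> rcases g3 with rfl | rfl
  · exact absurd rfl hne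
  · left
    obtain ⟨d, hd, e⟩ := core hq A hA a c ha hc h0 h3
    exact ⟨d, hd, projAct_smul _ _ a ha e⟩
  · right
    obtain ⟨d, hd, e⟩ := core hq (A * amat 1 one_ne_zero) (Gq_mul _ _ hA (amat_Gq _ _)) a c ha hc
      (by rw [Units.val_mul, ← Matrix.vecMul_vecMul, h0, Matrix.smul_vecMul, amat_P]; simp)
      (by rw [Units.val_mul, ← Matrix.vecMul_vecMul, h3, Matrix.smul_vecMul, amat_P]; simp)
    refine ⟨d, hd, projAct_smul _ _ a ha ?_⟩
    have e2 : (A : Matrix (Fin 4) (Fin 4) F) = (A * amat 1 one_ne_zero : GL (Fin 4) F).1 * (amat (1 : F) one_ne_zero).1 := by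
      rw [Units.val_mul, Matrix.mul_assoc]
      have : (amat (1 : F) one_ne_zero).1 * (amat (1 : F) one_ne_zero).1 = 1 := by
        ext i j; fin_cases i <;> fin_cases j <;> simp [amat, Matrix.mul_apply, Fin.sum_univ_four]
      rw [this, Matrix.mul_one]
    rw [e2, e, Matrix.smul_mul]
    congr 1
    ext i j; fin_cases i <;> fin_cases j <;> simp [amat, dmat, Matrix.mul_apply, Fin.sum_univ_four]
  · exact absurd rfl hne

def stabMap (x : Fˣ ⊕ Fˣ) : Submodule F (Fin 4 → F) → Submodule F (Fin 4 → F) :=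
  Sum.elim (fun d : Fˣ => projAct F (dmat (d : F) d.ne_zero))
    (fun d : Fˣ => projAct F (amat (d : F) d.ne_zero)) x

lemma stabMap_inj : Function.Injective (stabMap (F := F)) := by
  have mixed : ∀ d e : Fˣ, projAct F (dmat (d : F) d.ne_zero) ≠ projAct F (amat (e : F) e.ne_zero) := by
    intro d e h
    have := congrFun h (Submodule.span F {![1, 0, 0, 0]})
    rw [projAct_one_pt, projAct_one_pt, dmat_P, amat_P, Submodule.span_singleton_eq_span_singleton] at this
    obtain ⟨z, hz⟩ := this
    have := congrFun hz 0
    simp [Units.smul_def] at this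
  rintro (d | d) (e | e) h
  · have := congrFun h (Submodule.span F {![1, 1, 1, 1]})
    simp only [stabMap, Sum.elim_inl] at this
    rw [projAct_one_pt, projAct_one_pt, dmat_P, dmat_P, Submodule.span_singleton_eq_span_singleton] at this
    obtain ⟨z, hz⟩ := this
    have h0 := congrFun hz 0
    have h1 := congrFun hz 1
    simp [Units.smul_def] at h0 h1
    simp [h0] at h1
    exact congrArg _ (Units.ext h1)
  · exact absurd h (mixed d e)
  · exact absurd h.symm (mixed e d)
  · have := congrFun h (Submodule.span F {![1, 1, 1, 1]})
    simp only [stabMap, Sum.elim_inr] at this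
    rw [projAct_one_pt, projAct_one_pt, amat_P, amat_P, Submodule.span_singleton_eq_span_singleton] at this
    obtain ⟨z, hz⟩ := this
    have h0 := congrFun hz 3
    have h1 := congrFun hz 2
    simp [Units.smul_def] at h0 h1
    simp [h0] at h1
    exact congrArg _ (Units.ext h1)

lemma dmat_chord (d : F) (hd : d ≠ 0) :
    projAct F (dmat d hd) (Submodule.span F ({![0, 0, 0, 1], ![1, 0, 0, 0]} : Set (Fin 4 → F))) =
      Submodule.span F ({![0, 0, 0, 1], ![1, 0, 0, 0]} : Set (Fin 4 → F)) := by
  have : (![0, 0, 0, d ^ 3] : Fin 4 → F) = d ^ 3 • ![0, 0, 0, 1] := by simp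
  rw [projAct_two_pt, dmat_P, dmat_P]
  simp only [mul_zero, mul_one]
  rw [this, Submodule.span_insert, Submodule.span_insert,
    Submodule.span_singleton_smul_eq (IsUnit.mk0 _ (pow_ne_zero 3 hd))]

lemma amat_chord (d : F) (hd : d ≠ 0) :
    projAct F (amat d hd) (Submodule.span F ({![0, 0, 0, 1], ![1, 0, 0, 0]} : Set (Fin 4 → F))) =
      Submodule.span F ({![0, 0, 0, 1], ![1, 0, 0, 0]} : Set (Fin 4 → F)) := by
  have : (![d ^ 3, 0, 0, 0] : Fin 4 → F) = d ^ 3 • ![1, 0, 0, 0] := by simp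
  rw [projAct_two_pt, amat_P, amat_P]
  simp only [mul_zero, mul_one]
  rw [this, Submodule.span_insert, Submodule.span_insert,
    Submodule.span_singleton_smul_eq (IsUnit.mk0 _ (pow_ne_zero 3 hd)), sup_comm]

lemma stab_eq_range [Fintype F] (hq : 5 ≤ Fintype.card F) :
    lineStab F (Submodule.span F ({![0, 0, 0, 1], ![1, 0, 0, 0]} : Set (Fin 4 → F))) =
      Set.range stabMap := by
  ext f
  constructor
  · rintro ⟨hf, hl⟩
    obtain ⟨A, rfl⟩ := hf.1
    rcases stab_class hq A hf hl with ⟨d, hd, e⟩ | ⟨d, hd, e⟩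
    · exact ⟨Sum.inl (Units.mk0 d hd), e.symm⟩
    · exact ⟨Sum.inr (Units.mk0 d hd), e.symm⟩
  · rintro ⟨d | d, rfl⟩
    · exact ⟨dmat_Gq _ _, dmat_chord _ _⟩
    · exact ⟨amat_Gq _ _, amat_chord _ _⟩

lemma chord_trans [Finite F] (u v : Fin 4 → F) (hu : u ∈ cubicVecs F) (hv : v ∈ cubicVecs F)
    (hne : Submodule.span F {u} ≠ Submodule.span F {v}) :
    ∃ A : GL (Fin 4) F, projAct F A ∈ Gq F ∧
      projAct F A (Submodule.span F ({![0, 0, 0, 1], ![1, 0, 0, 0]} : Set (Fin 4 → F))) =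
        Submodule.span F {u, v} := by
  have inf : ∀ t : F, projAct F (tmat t) (Submodule.span F ({![0, 0, 0, 1], ![1, 0, 0, 0]} : Set (Fin 4 → F))) = Submodule.span F {![t ^ 3, t ^ 2, t, 1], ![1, 0, 0, 0]} := by
    intro t
    rw [projAct_two_pt, tmat_P, tmat_P]
    simp
  rcases hu with ⟨s, rfl⟩ | rfl <;> rcases hv with ⟨t, rfl⟩ | rfl
  · have hst : t - s ≠ 0 := by
      intro h
      rw [sub_eq_zero] at h
      subst h
      exact hne rfl
    refine ⟨tmat (t - s)⁻¹ * amat 1 one_ne_zero * tmat s,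
      Gq_mul _ _ (Gq_mul _ _ (tmat_Gq _) (amat_Gq _ _)) (tmat_Gq _), ?_⟩
    rw [projAct_mul, projAct_mul]
    simp only [Function.comp]
    rw [inf, projAct_two_pt, amat_P, amat_P, projAct_two_pt, tmat_P, tmat_P]
    have e : (![t ^ 3, t ^ 2, t, 1] : Fin 4 → F) = (t - s) ^ 3 • ![1 ^ 3 * 1 + 3 * s * (1 ^ 2 * (t - s)⁻¹) + 3 * s ^ 2 * (1 * (t - s)⁻¹ ^ 2) + s ^ 3 * (t - s)⁻¹ ^ 3,
        1 ^ 2 * (t - s)⁻¹ + 2 * s * (1 * (t - s)⁻¹ ^ 2) + s ^ 2 * (t - s)⁻¹ ^ 3, 1 * (t - s)⁻¹ ^ 2 + s * (t - s)⁻¹ ^ 3, (t - s)⁻¹ ^ 3] := by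
      apply vec_ext4 <;> simp <;> field_simp <;> ring
    rw [e, Set.pair_comm, Submodule.span_insert, Submodule.span_insert,
      Submodule.span_singleton_smul_eq (IsUnit.mk0 _ (pow_ne_zero 3 hst))]
    simp
  · exact ⟨tmat s, tmat_Gq s, inf s⟩
  · exact ⟨tmat t, tmat_Gq t, by rw [inf, Set.pair_comm]⟩
  · exact absurd rfl hne

lemma chord_image (A : GL (Fin 4) F) (hA : projAct F A ∈ Gq F) (ℓ) (h : isRealChord F ℓ) :
    isRealChord F (projAct F A ℓ) := by
  obtain ⟨u, hu, v, hv, hne, rfl⟩ := h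
  obtain ⟨a, ha, u', hu', eu⟩ := Gq_vec A hA _ hu
  obtain ⟨b, hb, v', hv', ev⟩ := Gq_vec A hA _ hv
  refine ⟨u', hu', v', hv', ?_, ?_⟩
  · intro h
    apply hne
    apply projAct_inj A
    rw [projAct_one_pt, projAct_one_pt, eu, ev, Submodule.span_singleton_smul_eq (IsUnit.mk0 _ ha),
      Submodule.span_singleton_smul_eq (IsUnit.mk0 _ hb), h]
  · rw [projAct_two_pt, eu, ev, Submodule.span_insert, Submodule.span_insert,
      Submodule.span_singleton_smul_eq (IsUnit.mk0 _ ha),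
      Submodule.span_singleton_smul_eq (IsUnit.mk0 _ hb)]

lemma stab_le (A : GL (Fin 4) F) (hA : projAct F A ∈ Gq F) (ℓ : Submodule F (Fin 4 → F)) :
    lineStab F (projAct F A ℓ) = (fun f => projAct F A ∘ f ∘ projAct F A⁻¹) '' lineStab F ℓ := by
  ext f
  constructor
  · rintro ⟨hf, hl⟩
    obtain ⟨B, rfl⟩ := hf.1
    refine ⟨projAct F (A * B * A⁻¹), ⟨Gq_mul _ _ (Gq_mul _ _ hA hf) (Gq_inv _ hA), ?_⟩, ?_⟩
    · rw [projAct_mul, projAct_mul]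
      simp only [Function.comp]
      rw [hl, projAct_left_inv]
    · funext W
      simp only [projAct_mul, Function.comp, projAct_right_inv]
  · rintro ⟨g, ⟨hg, hl⟩, rfl⟩
    obtain ⟨B, rfl⟩ := hg.1
    have : projAct F A ∘ projAct F B ∘ projAct F A⁻¹ = projAct F (A⁻¹ * B * A) := by
      simp only [projAct_mul]
    refine ⟨?_, ?_⟩
    · simp only [this]
      exact Gq_mul _ _ (Gq_mul _ _ (Gq_inv _ hA) hg) hA
    · simp only [Function.comp, projAct_left_inv, hl]

lemma stab_ncard (A : GL (Fin 4) F) (hA : projAct F A ∈ Gq F) (ℓ : Submodule F (Fin 4 → F)) :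
    (lineStab F (projAct F A ℓ)).ncard = (lineStab F ℓ).ncard := by
  rw [stab_le A hA]
  apply Set.ncard_image_of_injective
  intro f g h
  funext W
  have := congrFun h (projAct F A W)
  simp only [Function.comp, projAct_left_inv] at this
  exact projAct_inj A this

end helpers

theorem stmt_4 (q : ℕ) (F : Type) [Field F] [Fintype F]
    (hcard : Fintype.card F = q) (hq : 5 ≤ q) :
    isRealChord F (Submodule.span F ({![0, 0, 0, 1], ![1, 0, 0, 0]} : Set (Fin 4 → F))) ∧
    {ℓ : Submodule F (Fin 4 → F) | isRealChord F ℓ} = lineOrbit F (Submodule.span F ({![0, 0, 0, 1], ![1, 0, 0, 0]} : Set (Fin 4 → F))) ∧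
    (∀ ℓ : Submodule F (Fin 4 → F), isRealChord F ℓ → (lineStab F ℓ).ncard = 2 * (q - 1)) ∧
    lineStab F (Submodule.span F ({![0, 0, 0, 1], ![1, 0, 0, 0]} : Set (Fin 4 → F))) =
      {f | ∃ A : GL (Fin 4) F,
        ((∃ d : F, d ≠ 0 ∧
            (↑A : Matrix (Fin 4) (Fin 4) F) =
              !![1, 0, 0, 0; 0, d, 0, 0; 0, 0, d ^ 2, 0; 0, 0, 0, d ^ 3]) ∨
          (∃ b : F, b ≠ 0 ∧
            (↑A : Matrix (Fin 4) (Fin 4) F) =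
              !![0, 0, 0, 1; 0, 0, b, 0; 0, b ^ 2, 0, 0; b ^ 3, 0, 0, 0])) ∧
        f = projAct F A} := by
  have hq' : 5 ≤ Fintype.card F := by omega
  have hne : Submodule.span F {(![0, 0, 0, 1] : Fin 4 → F)} ≠ Submodule.span F {![1, 0, 0, 0]} := by
    intro h
    rw [Submodule.span_singleton_eq_span_singleton] at h
    obtain ⟨z, hz⟩ := h
    have := congrFun hz 0
    simp [Units.smul_def] at this
  have h0 : isRealChord F (Submodule.span F ({![0, 0, 0, 1], ![1, 0, 0, 0]} : Set (Fin 4 → F))) :=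
    ⟨_, e3_mem, _, e0_mem, hne, rfl⟩
  refine ⟨h0, ?_, ?_, ?_⟩
  · ext ℓ
    constructor
    · rintro ⟨u, hu, v, hv, huv, rfl⟩
      obtain ⟨A, hA, e⟩ := chord_trans u v hu hv huv
      exact ⟨_, hA, e⟩
    · rintro ⟨f, hf, rfl⟩
      obtain ⟨A, rfl⟩ := hf.1
      exact chord_image A hf _ h0
  · rintro ℓ ⟨u, hu, v, hv, huv, rfl⟩
    obtain ⟨A, hA, e⟩ := chord_trans u v hu hv huv
    classical
    rw [← e, stab_ncard A hA, stab_eq_range hq', ← Set.image_univ,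
      Set.ncard_image_of_injective _ stabMap_inj, Set.ncard_univ, Nat.card_eq_fintype_card,
      Fintype.card_sum, Fintype.card_units, hcard]
    omega
  · rw [stab_eq_range hq']
    ext f
    constructor
    · rintro ⟨d | d, rfl⟩
      · exact ⟨_, Or.inl ⟨d, d.ne_zero, rfl⟩, rfl⟩
      · exact ⟨_, Or.inr ⟨d, d.ne_zero, rfl⟩, rfl⟩
    · rintro ⟨A, ⟨d, hd, e⟩ | ⟨d, hd, e⟩, rfl⟩
      · refine ⟨Sum.inl (Units.mk0 d hd), ?_⟩
        have : A = dmat d hd := Units.ext e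
        rw [this]; rfl
      · refine ⟨Sum.inr (Units.mk0 d hd), ?_⟩
        have : A = amat d hd := Units.ext e
        rw [this]; rfl
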